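/- For every fixed t > γ > 0, Z_n > 0 for all n ≥ 1 and the free energy limit holds: lim_{n→∞} (ln Z_n)/n² = ln sinh(t+γ). In particular the free energy of the six-vertex model with DWBC in the ferroelectric phase equals the exponential growth rate ln F of the weight of the ground state configuration, where F = sinh(t+γ). -/

import Mathlib

open Real Filter Finset

/-- `φ(s) = sinh(2γ)/(sinh(s+γ) sinh(s-γ))`. -/
noncomputable def phiSV (γ s : ℝ) : ℝ :=
  Real.sinh (2 * γ) / (Real.sinh (s + γ) * Real.sinh (s - γ))

/-- The Hankel determinant `τ_n = det(φ^{(j+k-2)}(t))_{1 ≤ j,k ≤ n}`. -/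
noncomputable def tauSV (n : ℕ) (t γ : ℝ) : ℝ :=
  Matrix.det (Matrix.of fun j k : Fin n => iteratedDeriv ((j : ℕ) + (k : ℕ)) (phiSV γ) t)

/-- Izergin's formula for the partition function of the six-vertex model with DWBC,
ferroelectric parametrization. -/
noncomputable def ZSV (n : ℕ) (t γ : ℝ) : ℝ :=
  (Real.sinh (t - γ) * Real.sinh (t + γ)) ^ (n ^ 2) * tauSV n t γ /
    (∏ j ∈ Finset.range n, (Nat.factorial j : ℝ)) ^ 2

/-- nodes -/
noncomputable def xSV (k : ℕ) : ℝ := -2 * ((k : ℝ) + 1)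

/-- moments -/
noncomputable def momSV (w : ℕ → ℝ) (i : ℕ) : ℝ := ∑' k, w k * xSV k ^ i

/-- Hankel matrix of moments -/
noncomputable def hankSV (n : ℕ) (w : ℕ → ℝ) : Matrix (Fin n) (Fin n) ℝ :=
  Matrix.of fun i j => momSV w ((i : ℕ) + (j : ℕ))

/-- all moments converge -/
def NiceSV (w : ℕ → ℝ) : Prop := ∀ i : ℕ, Summable fun k => w k * xSV k ^ i

lemma det_one_add_ge {n : ℕ} (M : Matrix (Fin n) (Fin n) ℝ) (hM : M.PosSemidef) :
    1 ≤ (1 + M).det := by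
  have h1 := Matrix.eval_charpoly M (-1)
  rw [hM.1.charpoly_eq, Polynomial.eval_prod] at h1
  have h2 : (Matrix.scalar (Fin n) (-1 : ℝ) - M) = (-1 : ℝ) • (1 + M) := by
    ext i j
    simp [Matrix.one_apply, Matrix.diagonal_apply]
    split_ifs <;> ring
  rw [h2, Matrix.det_smul] at h1
  have h3 : (1 + M).det = ∏ i, (1 + hM.1.eigenvalues i) := by
    have h4 : ∏ i, (1 + hM.1.eigenvalues i) = (-1) ^ n * ∏ i, (-1 - hM.1.eigenvalues i) := by
      have : ((-1 : ℝ)) ^ n = ∏ _i : Fin n, (-1 : ℝ) := by simp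
      rw [this, ← Finset.prod_mul_distrib]
      exact Finset.prod_congr rfl fun i _ => by ring
    rw [h4]
    simp at h1
    rw [h1, ← mul_assoc, ← mul_pow]
    simp
  rw [h3]
  calc (1 : ℝ) = ∏ _i : Fin n, (1 : ℝ) := by simp
    _ ≤ _ := Finset.prod_le_prod (fun _ _ => zero_le_one)
      (fun i _ => by linarith [hM.eigenvalues_nonneg i])

lemma det_mono_SV {n : ℕ} (A B : Matrix (Fin n) (Fin n) ℝ) (hB : B.PosSemidef)
    (hd : B.det ≠ 0) (h : (A - B).PosSemidef) : B.det ≤ A.det := by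
  obtain ⟨L, rfl⟩ : ∃ L : Matrix (Fin n) (Fin n) ℝ, B = L.conjTranspose * L := by
    open scoped MatrixOrder in
    exact CStarAlgebra.nonneg_iff_eq_star_mul_self.1 hB.nonneg
  have hL : IsUnit L.det := by
    rw [Matrix.det_mul] at hd
    exact (right_ne_zero_of_mul hd).isUnit
  have hM := h.conjTranspose_mul_mul_same L⁻¹
  have h1 := det_one_add_ge _ hM
  have hLi : L⁻¹ * L = 1 := Matrix.nonsing_inv_mul _ hL
  have hLi' : L.conjTranspose * L⁻¹.conjTranspose = 1 := by
    rw [← Matrix.conjTranspose_mul, hLi, Matrix.conjTranspose_one]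
  have h2 : A = L.conjTranspose * (1 + L⁻¹.conjTranspose * (A - L.conjTranspose * L) * L⁻¹) * L := by
    calc A = L.conjTranspose * L + 1 * (A - L.conjTranspose * L) * 1 := by simp
      _ = L.conjTranspose * L + (L.conjTranspose * L⁻¹.conjTranspose) *
          (A - L.conjTranspose * L) * (L⁻¹ * L) := by rw [hLi', hLi]
      _ = _ := by
        rw [Matrix.mul_add, Matrix.add_mul, Matrix.mul_one]
        simp only [Matrix.mul_assoc]
  rw [h2, Matrix.det_mul, Matrix.det_mul, Matrix.det_mul]
  have h3 : L.conjTranspose.det = L.det := by rw [Matrix.det_conjTranspose]; simp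
  rw [h3]
  nlinarith [sq_nonneg L.det]

lemma hank_posSemidef (n : ℕ) (w : ℕ → ℝ) (hw : NiceSV w) (h0 : ∀ k, 0 ≤ w k) :
    (hankSV n w).PosSemidef := by
  refine Matrix.PosSemidef.of_dotProduct_mulVec_nonneg ?_ ?_
  · ext i j
    simp [hankSV, add_comm]
  · intro v
    have : star v ⬝ᵥ (hankSV n w).mulVec v = ∑' k, w k * (∑ i, v i * xSV k ^ (i : ℕ)) ^ 2 := by
      simp only [dotProduct, Matrix.mulVec, hankSV, momSV, Matrix.of_apply, star_trivial,
        Pi.star_apply]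
      have hs : ∀ i j : Fin n, HasSum (fun k => v i * ((w k * xSV k ^ ((i : ℕ) + j)) * v j))
          (v i * ((∑' k, w k * xSV k ^ ((i : ℕ) + j)) * v j)) :=
        fun i j => ((hw _).hasSum.mul_right _).mul_left _
      have := (hasSum_sum (s := Finset.univ) fun m _ =>
        hasSum_sum (s := Finset.univ) fun l _ => hs m l)
      simp_rw [Finset.mul_sum]
      rw [← this.tsum_eq]
      congr 1; ext k
      rw [sq, Finset.sum_mul_sum, Finset.mul_sum]
      simp_rw [Finset.mul_sum]
      refine Finset.sum_congr rfl fun m _ => Finset.sum_congr rfl fun l _ => ?_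
      ring
    rw [this]
    exact tsum_nonneg fun k => mul_nonneg (h0 k) (sq_nonneg _)

lemma hank_mono (n : ℕ) (u w : ℕ → ℝ) (hu : NiceSV u) (hw : NiceSV w) (h0 : ∀ k, 0 ≤ u k)
    (h : ∀ k, u k ≤ w k) (hd : (hankSV n u).det ≠ 0) : (hankSV n u).det ≤ (hankSV n w).det := by
  refine det_mono_SV _ _ (hank_posSemidef n u hu h0) hd ?_
  have : hankSV n w - hankSV n u = hankSV n (fun k => w k - u k) := by
    ext i j
    simp only [hankSV, momSV, Matrix.sub_apply, Matrix.of_apply, sub_mul]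
    exact ((hw _).tsum_sub (hu _)).symm
  rw [this]
  refine hank_posSemidef n _ ?_ fun k => sub_nonneg.2 (h k)
  intro i
  simp only [sub_mul]
  exact (hw i).sub (hu i)

lemma hank_smul (n : ℕ) (u : ℕ → ℝ) (c : ℝ) :
    (hankSV n fun k => c * u k).det = c ^ n * (hankSV n u).det := by
  have : (hankSV n fun k => c * u k) = c • hankSV n u := by
    ext i j
    simp only [hankSV, momSV, Matrix.smul_apply, Matrix.of_apply, smul_eq_mul, mul_assoc]
    exact tsum_mul_left
  rw [this, Matrix.det_smul, Fintype.card_fin]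


lemma det_rec_SV (a b : ℝ) (G : ℕ → ℕ → ℝ) 
    (hi0 : ∀ i, G (i+1) 0 = a * G i 0)
    (hij : ∀ i j, G (i+1) (j+1) = a * (G i j + G (i+1) j + G i (j+1))) (hb : b = a + a ^ 2) (n : ℕ) :
    (Matrix.of fun i j : Fin n => G i j).det = ∏ k ∈ Finset.range n, (G 0 0 * b ^ k) := by
  induction n with
  | zero => simp
  | succ n ih =>
    let B : Matrix (Fin (n+1)) (Fin (n+1)) ℝ := Matrix.of fun i j =>
      Fin.cases (G 0 j) (fun i' : Fin n => G (i' + 1) j - a * G i' j) i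
    let C : Matrix (Fin (n+1)) (Fin (n+1)) ℝ := Matrix.of fun i j =>
      Fin.cases (B i 0) (fun j' : Fin n => B i j'.succ - a * B i j'.castSucc) j
    have h1 : (Matrix.of fun i j : Fin (n+1) => G i j).det = B.det := by
      refine Matrix.det_eq_of_forall_row_eq_smul_add_pred (fun _ => a) ?_ ?_
      · intro j; simp [B]
      · intro i j; simp [B]
    have h2 : B.det = C.det := by
      refine Matrix.det_eq_of_forall_col_eq_smul_add_pred (fun _ => a) ?_ ?_
      · intro j; simp [C]
      · intro i j; simp [C]
    rw [h1, h2, Matrix.det_succ_column_zero, Fin.sum_univ_succ]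
    have h3 : ∀ i : Fin n, C i.succ 0 = 0 := by
      intro i; simp [C, B, hi0]
    have h4 : C.submatrix (Fin.succAbove 0) Fin.succ = b • (Matrix.of fun i j : Fin n => G i j) := by
      ext i j
      simp [C, B, hij, hb]
      ring
    have h5 : C 0 0 = G 0 0 := by simp [C, B]
    simp only [h3, h4, h5, Matrix.det_smul, Fintype.card_fin, ih]
    rw [Finset.prod_range_succ]
    simp
    ring

open Polynomial in
lemma hank_basis (n : ℕ) (w : ℕ → ℝ) (hw : NiceSV w) (p : ℕ → ℝ[X])
    (hdeg : ∀ i, (p i).natDegree = i) (hm : ∀ i, (p i).Monic) :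
    (hankSV n w).det = (Matrix.of fun i j : Fin n =>
      ∑' k, w k * ((p i).eval (xSV k) * (p j).eval (xSV k))).det := by
  let T : Matrix (Fin n) (Fin n) ℝ := Matrix.of fun i j => (p j).coeff i
  have hT : T.det = 1 := Matrix.det_matrixOfPolynomials (fun i : Fin n => p i)
    (fun i => hdeg i) (fun i => hm i)
  have : (Matrix.of fun i j : Fin n =>
      ∑' k, w k * ((p i).eval (xSV k) * (p j).eval (xSV k))) = T.transpose * hankSV n w * T := by
    ext i j
    have he : ∀ (i : Fin n) x, (p i).eval x = ∑ l : Fin n, (p i).coeff l * x ^ (l : ℕ) := by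
      intro i x
      rw [Polynomial.eval_eq_sum_range' (n := n) (by rw [hdeg]; exact i.2), Finset.sum_range]
    simp only [Matrix.mul_apply, Matrix.transpose_apply, T, Matrix.of_apply, hankSV, momSV, he]
    have hs : ∀ l m : Fin n, HasSum (fun k => (p i).coeff l * (w k * xSV k ^ ((l : ℕ) + m)) * (p j).coeff m)
      ((p i).coeff l * (∑' k, w k * xSV k ^ ((l : ℕ) + m)) * (p j).coeff m) :=
        fun i j => ((hw _).hasSum.mul_left _).mul_right _
    have := (hasSum_sum (s := Finset.univ) fun m _ => hasSum_sum (s := Finset.univ) fun l _ => hs l m)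
    simp_rw [Finset.sum_mul]
    rw [← this.tsum_eq]
    congr 1; ext k
    simp_rw [Finset.mul_sum]
    rw [Finset.sum_comm]
    refine Finset.sum_congr rfl fun m _ => Finset.sum_congr rfl fun l _ => ?_
    ring
  rw [this, Matrix.det_mul, Matrix.det_mul, Matrix.det_transpose, hT]
  ring

lemma nice_geom (q : ℝ) (h0 : 0 < q) (h1 : q < 1) : NiceSV fun k => q ^ (k + 1) := by
  intro i
  have h := summable_pow_mul_geometric_of_norm_lt_one i
    (r := q) (by rw [Real.norm_eq_abs, abs_of_pos h0]; exact h1)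
  have h2 := ((summable_nat_add_iff 1).2 h).mul_left ((-2) ^ i)
  refine h2.congr fun k => ?_
  simp only [xSV, mul_pow]
  push_cast
  ring

/-- mixed binomial moments -/
noncomputable def gSV (q : ℝ) (i j : ℕ) : ℝ := ∑' k : ℕ, q ^ (k + 1) * ((k.choose i : ℝ) * (k.choose j : ℝ))

lemma gSV_summable (q : ℝ) (h0 : 0 < q) (h1 : q < 1) (i j : ℕ) :
    Summable fun k : ℕ => q ^ (k + 1) * ((k.choose i : ℝ) * (k.choose j : ℝ)) := by
  have h := (summable_pow_mul_geometric_of_norm_lt_one (i + j)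
    (r := q) (by rw [Real.norm_eq_abs, abs_of_pos h0]; exact h1)).mul_left q
  refine Summable.of_nonneg_of_le (fun k => by positivity) (fun k => ?_) h
  have a1 : (k.choose i : ℝ) ≤ (k : ℝ) ^ i := by exact_mod_cast Nat.choose_le_pow k i
  have a2 : (k.choose j : ℝ) ≤ (k : ℝ) ^ j := by exact_mod_cast Nat.choose_le_pow k j
  calc q ^ (k + 1) * ((k.choose i : ℝ) * (k.choose j : ℝ)) 
      ≤ q ^ (k + 1) * ((k : ℝ) ^ i * (k : ℝ) ^ j) := by gcongr
    _ = _ := by ring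

lemma gSV_rec (q : ℝ) (h0 : 0 < q) (h1 : q < 1) (i j : ℕ) :
    gSV q (i+1) (j+1) = q / (1 - q) * (gSV q i j + gSV q (i+1) j + gSV q i (j+1)) := by
  have hS := gSV_summable q h0 h1
  have h : gSV q (i+1) (j+1) = q * (gSV q i j + gSV q (i+1) j + gSV q i (j+1) + gSV q (i+1) (j+1)) := by
    conv_lhs => rw [gSV, (hS _ _).tsum_eq_zero_add]
    unfold gSV
    rw [← (hS _ _).tsum_add (hS _ _), ← ((hS _ _).add (hS _ _)).tsum_add (hS _ _),
      ← (((hS _ _).add (hS _ _)).add (hS _ _)).tsum_add (hS _ _), ← tsum_mul_left]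
    simp only [Nat.choose_zero_succ, Nat.cast_zero, mul_zero, zero_add]
    congr 1; ext k
    rw [Nat.choose_succ_succ, Nat.choose_succ_succ]
    push_cast
    ring
  have : (1 - q) ≠ 0 := by linarith
  field_simp
  linarith

lemma gSV_rec0 (q : ℝ) (h0 : 0 < q) (h1 : q < 1) (i : ℕ) :
    gSV q (i+1) 0 = q / (1 - q) * gSV q i 0 := by
  have hS := gSV_summable q h0 h1
  have h : gSV q (i+1) 0 = q * (gSV q i 0 + gSV q (i+1) 0) := by
    conv_lhs => rw [gSV, (hS _ _).tsum_eq_zero_add]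
    unfold gSV
    rw [← (hS _ _).tsum_add (hS _ _), ← tsum_mul_left]
    simp only [Nat.choose_zero_succ, Nat.cast_zero, mul_zero, zero_mul, zero_add]
    congr 1; ext k
    rw [Nat.choose_succ_succ]
    push_cast
    simp
    ring
  have : (1 - q) ≠ 0 := by linarith
  field_simp
  linarith

lemma gSV_00 (q : ℝ) (h0 : 0 < q) (h1 : q < 1) : gSV q 0 0 = q / (1 - q) := by
  simp only [gSV, Nat.choose_zero_right, Nat.cast_one, mul_one, pow_succ]
  rw [tsum_mul_right, tsum_geometric_of_lt_one h0.le h1]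
  field_simp

open Polynomial in
/-- monic basis adapted to the nodes -/
noncomputable def pSV (i : ℕ) : ℝ[X] := ∏ l ∈ Finset.range i, (X - C (xSV l))

lemma pSV_eval (i k : ℕ) : (pSV i).eval (xSV k) = (-2) ^ i * (i.factorial : ℝ) * (k.choose i : ℝ) := by
  have h : (k.descFactorial i : ℝ) = (i.factorial : ℝ) * (k.choose i : ℝ) := by
    exact_mod_cast Nat.descFactorial_eq_factorial_mul_choose k i
  rw [mul_assoc, ← h, ← descPochhammer_eval_eq_descFactorial]
  induction i with
  | zero => simp [pSV]
  | succ i ih =>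
    have : pSV (i+1) = pSV i * (Polynomial.X - Polynomial.C (xSV i)) := by
      rw [pSV, Finset.prod_range_succ, pSV]
    rw [this, Polynomial.eval_mul, ih (by exact_mod_cast Nat.descFactorial_eq_factorial_mul_choose k i), descPochhammer_succ_right]
    simp [xSV]
    ring

lemma hank_geom (n : ℕ) (q : ℝ) (h0 : 0 < q) (h1 : q < 1) :
    (hankSV n fun k => q ^ (k + 1)).det =
      (∏ j ∈ Finset.range n, (Nat.factorial j : ℝ)) ^ 2 *
        ∏ k ∈ Finset.range n, (q / (1 - q) * (4 * q / (1 - q) ^ 2) ^ k) := by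
  rw [hank_basis n _ (nice_geom q h0 h1) pSV (fun i => by simp [pSV, Polynomial.natDegree_prod_of_monic _ _ fun l _ => Polynomial.monic_X_sub_C (xSV l)])
    (fun i => Polynomial.monic_prod_of_monic _ _ fun l _ => Polynomial.monic_X_sub_C (xSV l))]
  let v : Fin n → ℝ := fun i => (-2) ^ (i : ℕ) * ((i : ℕ).factorial : ℝ)
  have : (Matrix.of fun i j : Fin n =>
      ∑' k, q ^ (k + 1) * ((pSV i).eval (xSV k) * (pSV j).eval (xSV k))) =
      Matrix.diagonal v * (Matrix.of fun i j : Fin n => gSV q i j) * Matrix.diagonal v := by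
    ext i j
    rw [Matrix.mul_diagonal, Matrix.diagonal_mul]
    simp only [Matrix.of_apply, gSV, v, pSV_eval]
    rw [← tsum_mul_left, ← tsum_mul_right]
    congr 1; ext k
    ring
  have h1q : (1 - q) ≠ 0 := by linarith
  rw [this, Matrix.det_mul, Matrix.det_mul, det_rec_SV (q / (1 - q)) (q / (1 - q) ^ 2) _
    (gSV_rec0 q h0 h1) (gSV_rec q h0 h1) (by field_simp; ring), Matrix.det_diagonal, gSV_00 q h0 h1]
  rw [← Finset.prod_range (fun i => (-2 : ℝ) ^ i * (i.factorial : ℝ))]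
  rw [← Finset.prod_pow, ← Finset.prod_mul_distrib, ← Finset.prod_mul_distrib, ← Finset.prod_mul_distrib]
  refine Finset.prod_congr rfl fun k _ => ?_
  have : (4 * q / (1 - q) ^ 2) ^ k = (-2 : ℝ) ^ k * (-2 : ℝ) ^ k * (q / (1 - q) ^ 2) ^ k := by
    rw [← mul_pow, ← mul_pow]; congr 1; ring
  rw [this]
  ring

/-- weights -/
noncomputable def wSV (γ s : ℝ) (k : ℕ) : ℝ :=
  2 * (Real.exp (xSV k * (s - γ)) - Real.exp (xSV k * (s + γ)))

lemma exp_xSV (y : ℝ) (k : ℕ) : Real.exp (xSV k * y) = Real.exp (-2 * y) ^ (k + 1) := by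
  rw [← Real.exp_nat_mul]
  congr 1
  simp [xSV]
  ring

lemma xSV_neg (k : ℕ) : xSV k < 0 := by
  unfold xSV
  have : (0 : ℝ) ≤ k := Nat.cast_nonneg k
  linarith

lemma nice_exp (y : ℝ) (hy : 0 < y) (i : ℕ) : Summable fun k => Real.exp (xSV k * y) * xSV k ^ i := by
  simp_rw [exp_xSV]
  exact nice_geom _ (Real.exp_pos _) (Real.exp_lt_one_iff.2 (by linarith)) i

lemma wSV_nice (γ s : ℝ) (hγ : 0 < γ) (hs : γ < s) : NiceSV (wSV γ s) := by
  intro i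
  refine (((nice_exp (s - γ) (by linarith) i).sub (nice_exp (s + γ) (by linarith) i)).mul_left 2).congr ?_
  intro k
  simp only [wSV]; ring

lemma hasDerivAt_mom (γ s : ℝ) (hγ : 0 < γ) (hs : γ < s) (m : ℕ) :
    HasDerivAt (fun s => momSV (wSV γ s) m) (momSV (wSV γ s) (m + 1)) s := by
  unfold momSV
  obtain ⟨s0, hs1, hs0⟩ := exists_between hs
  refine hasDerivAt_tsum_of_isPreconnected (t := Set.Ioi s0) (y₀ := s)
    (g := fun k s => wSV γ s k * xSV k ^ m) (g' := fun k s => wSV γ s k * xSV k ^ (m + 1))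
    (u := fun k => 2 * |Real.exp (xSV k * (s0 - γ)) * xSV k ^ (m + 1)|)
    ((nice_exp (s0 - γ) (by linarith) (m + 1)).abs.mul_left 2) isOpen_Ioi isPreconnected_Ioi
    ?_ ?_ hs0 (wSV_nice γ s hγ hs m) hs0
  · intro k y _
    unfold wSV
    have e1 : HasDerivAt (fun y => Real.exp (xSV k * (y - γ))) (Real.exp (xSV k * (y - γ)) * (xSV k * 1)) y :=
      (((hasDerivAt_id y).sub_const γ).const_mul (xSV k)).exp
    have e2 : HasDerivAt (fun y => Real.exp (xSV k * (y + γ))) (Real.exp (xSV k * (y + γ)) * (xSV k * 1)) y :=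
      (((hasDerivAt_id y).add_const γ).const_mul (xSV k)).exp
    convert! ((e1.sub e2).const_mul 2).mul_const (xSV k ^ m) using 1
    ring
  · intro k y hy
    have hy : s0 < y := hy
    have hx := xSV_neg k
    rw [Real.norm_eq_abs, abs_mul, abs_mul, ← mul_assoc]
    refine mul_le_mul_of_nonneg_right ?_ (abs_nonneg _)
    have l1 : Real.exp (xSV k * (y + γ)) ≤ Real.exp (xSV k * (y - γ)) :=
      Real.exp_le_exp.2 (by nlinarith)
    have l2 : Real.exp (xSV k * (y - γ)) ≤ Real.exp (xSV k * (s0 - γ)) :=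
      Real.exp_le_exp.2 (by nlinarith)
    have l3 := Real.exp_pos (xSV k * (y + γ))
    rw [wSV, abs_of_nonneg (by linarith), abs_of_pos (Real.exp_pos _)]
    linarith

lemma geom_sum_SV (y : ℝ) (hy : 0 < y) : ∑' k, Real.exp (xSV k * y) = Real.exp (-y) / (2 * Real.sinh y) := by
  have h1 : Real.exp (-2 * y) < 1 := Real.exp_lt_one_iff.2 (by linarith)
  simp_rw [exp_xSV, pow_succ]
  rw [tsum_mul_right, tsum_geometric_of_lt_one (Real.exp_pos _).le h1]
  have h2 : Real.exp (-2 * y) = Real.exp (-y) * Real.exp (-y) := by rw [← Real.exp_add]; ring_nf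
  have h3 : Real.exp y * Real.exp (-y) = 1 := by rw [← Real.exp_add]; simp
  have h4 : 0 < Real.sinh y := Real.sinh_pos_iff.2 hy
  have h5 : 1 - Real.exp (-2 * y) = Real.exp (-y) * (2 * Real.sinh y) := by
    rw [Real.sinh_eq, h2]; linear_combination -h3
  have h6 := Real.exp_pos (-y)
  rw [h5, h2]
  field_simp

lemma phi_eq_mom (γ s : ℝ) (hγ : 0 < γ) (hs : γ < s) : phiSV γ s = momSV (wSV γ s) 0 := by
  have n1 : Summable fun k => Real.exp (xSV k * (s - γ)) := by
    simpa using nice_exp (s - γ) (by linarith) 0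
  have n2 : Summable fun k => Real.exp (xSV k * (s + γ)) := by
    simpa using nice_exp (s + γ) (by linarith) 0
  simp only [momSV, wSV, pow_zero, mul_one]
  rw [tsum_mul_left, n1.tsum_sub n2, geom_sum_SV _ (by linarith), geom_sum_SV _ (by linarith), phiSV]
  have h1 : 0 < Real.sinh (s - γ) := Real.sinh_pos_iff.2 (by linarith)
  have h2 : 0 < Real.sinh (s + γ) := Real.sinh_pos_iff.2 (by linarith)
  have e : Real.sinh (2 * γ) = Real.exp (-(s - γ)) * Real.sinh (s + γ) - Real.exp (-(s + γ)) * Real.sinh (s - γ) := by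
    have : 2 * γ = (s + γ) - (s - γ) := by ring
    rw [this, Real.sinh_sub, ← Real.cosh_sub_sinh, ← Real.cosh_sub_sinh]
    ring
  rw [e]
  field_simp

lemma iter_phi (γ : ℝ) (hγ : 0 < γ) (m : ℕ) : ∀ s, γ < s →
    iteratedDeriv m (phiSV γ) s = momSV (wSV γ s) m := by
  induction m with
  | zero => intro s hs; rw [iteratedDeriv_zero, phi_eq_mom γ s hγ hs]
  | succ m ih =>
    intro s hs
    rw [iteratedDeriv_succ]
    have : iteratedDeriv m (phiSV γ) =ᶠ[nhds s] fun s => momSV (wSV γ s) m := by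
      filter_upwards [lt_mem_nhds hs] with y hy using ih y hy
    rw [this.deriv_eq, (hasDerivAt_mom γ s hγ hs m).deriv]

lemma tau_eq (n : ℕ) (t γ : ℝ) (hγ : 0 < γ) (ht : γ < t) :
    tauSV n t γ = (hankSV n (wSV γ t)).det := by
  unfold tauSV hankSV
  congr 1; ext i j
  simp only [Matrix.of_apply]
  exact iter_phi γ hγ _ t ht

lemma prod_geom_SV (a S : ℝ) (hS : 0 < S) (n : ℕ) :
    S ^ (n ^ 2) * ∏ k ∈ Finset.range n, (a * (1 / S ^ 2) ^ k) = (a * S) ^ n := by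
  induction n with
  | zero => simp
  | succ n ih =>
    rw [Finset.prod_range_succ, pow_succ (a * S), ← ih]
    have : S ^ ((n+1) ^ 2) = S ^ (n ^ 2) * (S ^ 2) ^ n * S := by
      rw [← pow_mul, ← pow_add, ← pow_succ]; congr 1; ring
    rw [this, one_div, inv_pow]
    field_simp

lemma Z_bounds (t γ : ℝ) (hγ : 0 < γ) (ht : γ < t) : ∃ c d : ℝ, 0 < c ∧ 0 < d ∧ ∀ n : ℕ,
    Real.sinh (t + γ) ^ (n ^ 2) * c ^ n ≤ ZSV n t γ ∧
    ZSV n t γ ≤ Real.sinh (t + γ) ^ (n ^ 2) * d ^ n := by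
  set q := Real.exp (-2 * (t - γ)) with hq
  have q0 : 0 < q := Real.exp_pos _
  have q1 : q < 1 := Real.exp_lt_one_iff.2 (by linarith)
  set r := Real.exp (-2 * (2 * γ)) with hr
  have r0 : 0 < r := Real.exp_pos _
  have r1 : r < 1 := Real.exp_lt_one_iff.2 (by linarith)
  have hS : 0 < Real.sinh (t - γ) := Real.sinh_pos_iff.2 (by linarith)
  have hP : 0 < Real.sinh (t + γ) := Real.sinh_pos_iff.2 (by linarith)
  have hw : ∀ k, wSV γ t k = 2 * (q ^ (k + 1) * (1 - r ^ (k + 1))) := by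
    intro k
    rw [wSV, hq, hr, ← exp_xSV, ← exp_xSV, mul_sub (Real.exp _), ← Real.exp_add]
    ring_nf
  have hqS : 4 * q / (1 - q) ^ 2 = 1 / Real.sinh (t - γ) ^ 2 := by
    have h2 : q = Real.exp (-(t - γ)) * Real.exp (-(t - γ)) := by rw [← Real.exp_add, hq]; ring_nf
    have h3 : Real.exp (t - γ) * Real.exp (-(t - γ)) = 1 := by rw [← Real.exp_add]; simp
    have h5 : 1 - q = Real.exp (-(t - γ)) * (2 * Real.sinh (t - γ)) := by
      rw [Real.sinh_eq, h2]; linear_combination -h3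
    have h6 := Real.exp_pos (-(t - γ))
    rw [h5, h2]
    field_simp
    norm_num
  have hq1 : 0 < q / (1 - q) := div_pos q0 (by linarith)
  have hr1 : 0 < 1 - r := by linarith
  have hU : ∀ n, 0 < (hankSV n fun k => q ^ (k + 1)).det := by
    intro n
    rw [hank_geom n q q0 q1]
    have : 0 < 4 * q / (1 - q) ^ 2 := by rw [hqS]; positivity
    have h' : ∀ j ∈ Finset.range n, (0 : ℝ) < (Nat.factorial j : ℝ) := fun j _ => by positivity
    refine mul_pos (pow_pos (Finset.prod_pos h') 2) (Finset.prod_pos fun k _ => by positivity)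
  have key : ∀ (e : ℝ) (n : ℕ), (Real.sinh (t - γ) * Real.sinh (t + γ)) ^ (n ^ 2) *
      (hankSV n fun k => e * q ^ (k + 1)).det / (∏ j ∈ Finset.range n, (Nat.factorial j : ℝ)) ^ 2
      = Real.sinh (t + γ) ^ (n ^ 2) * (e * (q / (1 - q) * Real.sinh (t - γ))) ^ n := by
    intro e n
    have h' : (0 : ℝ) < ∏ j ∈ Finset.range n, (Nat.factorial j : ℝ) :=
      Finset.prod_pos fun j _ => by positivity
    rw [hank_smul n (fun k => q ^ (k + 1)), hank_geom n q q0 q1, mul_pow e, ← prod_geom_SV _ _ hS, hqS, mul_pow]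
    field_simp
  have nice : ∀ e : ℝ, NiceSV fun k => e * q ^ (k + 1) := fun e i => by
    simp_rw [mul_assoc]
    exact (nice_geom q q0 q1 i).mul_left e
  have nw := wSV_nice γ t hγ ht
  have mono : ∀ (n : ℕ) (A B : ℝ), A ≤ B → (Real.sinh (t - γ) * Real.sinh (t + γ)) ^ (n ^ 2) * A /
      (∏ j ∈ Finset.range n, (Nat.factorial j : ℝ)) ^ 2 ≤
      (Real.sinh (t - γ) * Real.sinh (t + γ)) ^ (n ^ 2) * B /
      (∏ j ∈ Finset.range n, (Nat.factorial j : ℝ)) ^ 2 := by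
    intro n A B h
    gcongr
  have hrk : ∀ k : ℕ, r ^ (k + 1) ≤ r := fun k => by
    simpa using pow_le_pow_of_le_one r0.le r1.le (Nat.succ_le_succ (Nat.zero_le k))
  have lowpos : ∀ n, 0 < (hankSV n fun k => (2 * (1 - r)) * q ^ (k + 1)).det := by
    intro n
    rw [hank_smul n (fun k => q ^ (k + 1))]
    exact mul_pos (by positivity) (hU n)
  have low : ∀ n, (hankSV n fun k => (2 * (1 - r)) * q ^ (k + 1)).det ≤ (hankSV n (wSV γ t)).det := by
    intro n
    refine hank_mono n _ _ (nice _) nw (fun k => by positivity) (fun k => ?_) (lowpos n).ne'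
    rw [hw]
    have := pow_pos q0 (k + 1)
    nlinarith [hrk k]
  have up : ∀ n, (hankSV n (wSV γ t)).det ≤ (hankSV n fun k => 2 * q ^ (k + 1)).det := by
    intro n
    refine hank_mono n _ _ nw (nice _) (fun k => ?_) (fun k => ?_) ((lowpos n).trans_le (low n)).ne'
    · rw [hw]
      have := pow_pos q0 (k + 1)
      have := hrk k
      have : 0 ≤ 1 - r ^ (k + 1) := by linarith
      positivity
    · rw [hw]
      have := pow_pos q0 (k + 1)
      have := pow_pos r0 (k + 1)
      nlinarith
  refine ⟨2 * (1 - r) * (q / (1 - q) * Real.sinh (t - γ)), 2 * (q / (1 - q) * Real.sinh (t - γ)),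
    by positivity, by positivity, fun n => ⟨?_, ?_⟩⟩
  · rw [← key, ZSV, tau_eq n t γ hγ ht]
    exact mono n _ _ (low n)
  · rw [← key, ZSV, tau_eq n t γ hγ ht]
    exact mono n _ _ (up n)


/-- **Free energy in the ferroelectric phase (gs6).**
For fixed `t > γ > 0`, `Z_n > 0` for all `n ≥ 1` and
`lim_{n→∞} (ln Z_n)/n² = ln sinh(t+γ)`. -/
theorem free_energy_ferroelectric (t γ : ℝ) (hγ : 0 < γ) (ht : γ < t) :
    (∀ n : ℕ, 1 ≤ n → 0 < ZSV n t γ) ∧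
    Filter.Tendsto (fun n : ℕ => Real.log (ZSV n t γ) / (n : ℝ) ^ 2)
      Filter.atTop (nhds (Real.log (Real.sinh (t + γ)))) := by
  obtain ⟨c, d, hc, hd, hb⟩ := Z_bounds t γ hγ ht
  have hP : 0 < Real.sinh (t + γ) := Real.sinh_pos_iff.2 (by linarith)
  have hpos : ∀ n : ℕ, 0 < ZSV n t γ := fun n => lt_of_lt_of_le (by positivity) (hb n).1
  refine ⟨fun n _ => hpos n, ?_⟩
  have lim : ∀ e : ℝ, Filter.Tendsto (fun n : ℕ => Real.log (Real.sinh (t + γ)) + Real.log e / (n : ℝ))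
      Filter.atTop (nhds (Real.log (Real.sinh (t + γ)))) := by
    intro e
    simpa using (tendsto_const_nhds (x := Real.log (Real.sinh (t + γ)))).add
      (tendsto_const_div_atTop_nhds_zero_nat (Real.log e))
  have hlog : ∀ e : ℝ, 0 < e → ∀ n : ℕ, 1 ≤ n →
      Real.log (Real.sinh (t + γ) ^ (n ^ 2) * e ^ n) / (n : ℝ) ^ 2 =
      Real.log (Real.sinh (t + γ)) + Real.log e / (n : ℝ) := by
    intro e he n hn
    have hn' : (n : ℝ) ≠ 0 := by positivity
    rw [Real.log_mul (by positivity) (by positivity), Real.log_pow, Real.log_pow]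
    push_cast
    field_simp
  refine tendsto_of_tendsto_of_tendsto_of_le_of_le' (lim c) (lim d) ?_ ?_
  · filter_upwards [Filter.eventually_ge_atTop 1] with n hn
    rw [← hlog c hc n hn]
    have := Real.log_le_log (by positivity) (hb n).1
    gcongr
  · filter_upwards [Filter.eventually_ge_atTop 1] with n hn
    rw [← hlog d hd n hn]
    have := Real.log_le_log (hpos n) (hb n).2
    gcongr
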